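/- Let g ≥ 2 and let Γ be the fundamental group of the closed orientable surface of genus g, i.e. the presented group with generators a₁,b₁,…,a_g,b_g and the single relator [a₁,b₁][a₂,b₂]⋯[a_g,b_g]. If Δ₀ is a finitely generated subgroup of Γ, then there exist n ≥ 1 and an injective group homomorphism ρ : Γ → GL(n, ℂ) such that for every γ ∈ Γ with γ ∉ Δ₀ there exists a polynomial P in the n² matrix-entry variables with complex coefficients such that P vanishes at the matrix ρ(δ) for every δ ∈ Δ₀ but P(ρ(γ)) ≠ 0. -/

import Mathlib

open scoped commutatorElement

/-- The single relator `[a₁,b₁][a₂,b₂]⋯[a_g,b_g]` of the genus-`g` surface group, as an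
element of the free group on the `2g` generators `a₁,…,a_g` (indexed by `Sum.inl`) and
`b₁,…,b_g` (indexed by `Sum.inr`). -/
def surfaceRelator (g : ℕ) : FreeGroup (Fin g ⊕ Fin g) :=
  ((List.finRange g).map
    (fun i => ⁅FreeGroup.of (Sum.inl i : Fin g ⊕ Fin g),
               FreeGroup.of (Sum.inr i : Fin g ⊕ Fin g)⁆)).prod

/-- The fundamental group of the closed orientable surface of genus `g`. -/
def SurfaceGroup (g : ℕ) : Type :=
  PresentedGroup ({surfaceRelator g} : Set (FreeGroup (Fin g ⊕ Fin g)))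

noncomputable instance (g : ℕ) : Group (SurfaceGroup g) := by
  unfold SurfaceGroup; infer_instance

/-- Evaluate a polynomial in the `n²` matrix-entry variables at a matrix in `GL(n, ℂ)`. -/
noncomputable def evalAtGL {n : ℕ} (A : GL (Fin n) ℂ)
    (P : MvPolynomial (Fin n × Fin n) ℂ) : ℂ :=
  MvPolynomial.eval (fun p => (A : Matrix (Fin n) (Fin n) ℂ) p.1 p.2) P

/-!
The surface group of genus `g` embeds in the group `W` generated by the reflections in the sides of
a right-angled `(2g + 2)`-gon: the surface is tiled by four such polygons.

Following P. Scott, a finitely generated subgroup `H` of `W` is a virtual retract. In the dual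
square complex, `H` is carried by a finite folded graph mapping to the quotient by `H`; take one
whose boundary is shortest and whose area is then largest, the area being bounded by the length of
the boundary. If two edges with commuting labels at a vertex spanned no square, a square could be
glued in there. When one of its other two sides is already present, this, or a folding, shortens
the boundary; otherwise it increases the area without lengthening the boundary, as each side of the
polygon has only two neighbours. So all squares are present and `W` acts on the vertices; the
stabilizer of the base vertex retracts onto `H` by reading off the labels met along a path.

Let `T` be the faithful Tits representation of `W`, and `r : K → H` a retraction from a subgroup of
finite index. Then `w ∈ H` if and only if `w ∈ K` and `T (r w) = T w`, which is a system of linear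
equations in the matrix entries of `w` acting on `coind_K (T ∘ r) ⊕ T`.
-/

section RightAngledCoxeterGroup

variable {B : Type*} [DecidableEq B] (G : SimpleGraph B) [DecidableRel G.Adj]

/-- The Coxeter matrix of the right-angled Coxeter group of `G`: adjacent generators commute, and
distinct non-adjacent generators satisfy no relation (encoded by the entry `0`). -/
def racMatrix : CoxeterMatrix B where
  M := Matrix.of fun s t => if s = t then 1 else if G.Adj s t then 2 else 0
  isSymm := by
    ext s t
    simp only [Matrix.transpose_apply, Matrix.of_apply, G.adj_comm s t, eq_comm (a := s)]
  diagonal := by simp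
  off_diagonal := by
    intro s t hst
    simp only [Matrix.of_apply, hst, if_false]
    split_ifs <;> simp

lemma racMatrix_apply (s t : B) :
    racMatrix G s t = if s = t then 1 else if G.Adj s t then 2 else 0 := rfl

variable {G}

lemma racMatrix_isLiftable {M : Type*} [Monoid M] {f : B → M} (hinv : ∀ s, f s * f s = 1)
    (hcomm : ∀ s t, G.Adj s t → Commute (f s) (f t)) : (racMatrix G).IsLiftable f := by
  intro s t
  rw [racMatrix_apply]
  split_ifs with heq hadj
  · rw [heq, pow_one, hinv]
  · rw [(hcomm s t hadj).mul_pow, pow_two, pow_two, hinv, hinv, one_mul]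
  · exact pow_zero _

variable {W : Type*} [Group W] (cs : CoxeterSystem (racMatrix G) W)

lemma commute_simple_of_adj {s t : B} (hst : G.Adj s t) : Commute (cs.simple s) (cs.simple t) := by
  have hpow := cs.simple_mul_simple_pow s t
  rw [racMatrix_apply, if_neg hst.ne, if_pos hst, pow_two] at hpow
  rw [commute_iff_eq, eq_inv_of_mul_eq_one_left hpow, mul_inv_rev, cs.inv_simple, cs.inv_simple]

lemma not_isRightDescent_mul_simple_of_adj {w : W} {s t : B} (hst : G.Adj s t)
    (ht : ¬ cs.IsRightDescent w t) (hs : ¬ cs.IsRightDescent (w * cs.simple t) s) :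
    ¬ cs.IsRightDescent w s := by
  intro hdesc
  have hws := cs.isRightDescent_iff.1 hdesc
  have hwt := cs.not_isRightDescent_iff.1 ht
  have hwts := cs.not_isRightDescent_iff.1 hs
  rw [mul_assoc, ← (commute_simple_of_adj cs hst).eq, ← mul_assoc] at hwts
  have hle := cs.length_mul_le (w * cs.simple s) (cs.simple t)
  rw [cs.length_simple] at hle
  omega

end RightAngledCoxeterGroup

lemma exists_eq_mul_simple_of_isRightDescent {B W : Type*} [Group W] {M : CoxeterMatrix B}
    (cs : CoxeterSystem M W) {w : W} {t : B} (ht : cs.IsRightDescent w t) :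
    ∃ w', w = w' * cs.simple t ∧ ¬ cs.IsRightDescent w' t ∧ cs.length w = cs.length w' + 1 := by
  have hnot := cs.isRightDescent_iff_not_isRightDescent_mul.1 ht
  exact ⟨w * cs.simple t, by simp, hnot, (cs.isRightDescent_iff.1 ht).symm⟩

section TitsRepresentation

variable {B : Type*} [DecidableEq B] (G : SimpleGraph B) [DecidableRel G.Adj]
variable (K : Type*) [CommRing K]

/-- The matrix of the symmetric bilinear form underlying the Tits representation, normalised so
that the generating reflections are integral: twice the usual `-cos (π / m s t)`. -/
def titsCoeff (s t : B) : K := if s = t then 2 else if G.Adj s t then 0 else -2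

/-- The linear form `2 ⟨s, ·⟩` of the Tits representation. -/
noncomputable def titsForm (s : B) : Module.Dual K (B →₀ K) :=
  Finsupp.linearCombination K (titsCoeff G K s)

/-- The generating reflection of the Tits representation. -/
noncomputable def titsReflection (s : B) : Module.End K (B →₀ K) :=
  Module.preReflection (Finsupp.single s 1) (titsForm G K s)

@[simp]
lemma titsForm_single (s t : B) :
    titsForm G K s (Finsupp.single t 1) = titsCoeff G K s t := by
  simp [titsForm]

variable {G K} in
lemma titsCoeff_self (s : B) : titsCoeff G K s s = 2 := if_pos rfl

variable {G K} in
lemma titsCoeff_of_adj {s t : B} (h : G.Adj s t) : titsCoeff G K s t = 0 := by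
  simp [titsCoeff, h, h.ne]

variable {G K} in
lemma titsCoeff_of_not_adj {s t : B} (hne : s ≠ t) (h : ¬ G.Adj s t) :
    titsCoeff G K s t = -2 := by
  simp [titsCoeff, h, hne]

lemma titsReflection_isLiftable : (racMatrix G).IsLiftable (titsReflection G K) := by
  refine racMatrix_isLiftable (fun s => ?_) (fun s t hst => ?_)
  · have hself : titsForm G K s (Finsupp.single s 1) = 2 := by
      rw [titsForm_single, titsCoeff_self]
    exact LinearMap.ext fun v => Module.involutive_preReflection hself v
  · refine LinearMap.ext fun v => ?_
    simp only [titsReflection, Module.End.mul_apply, Module.preReflection_apply, map_sub, map_smul,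
      titsForm_single, titsCoeff_of_adj hst, titsCoeff_of_adj hst.symm]
    module

variable {G} {W : Type*} [Group W] (cs : CoxeterSystem (racMatrix G) W)

/-- The Tits representation of a right-angled Coxeter group. -/
noncomputable def titsRep : Representation K W (B →₀ K) :=
  cs.lift ⟨titsReflection G K, titsReflection_isLiftable G K⟩

lemma titsRep_mul_simple_single (w : W) (s t : B) :
    titsRep K cs (w * cs.simple s) (Finsupp.single t 1) =
      titsRep K cs w (Finsupp.single t 1) -
        titsCoeff G K s t • titsRep K cs w (Finsupp.single s 1) := by
  have hs : titsRep K cs (cs.simple s) = titsReflection G K s :=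
    cs.lift_apply_simple (titsReflection_isLiftable G K) s
  rw [map_mul, hs, Module.End.mul_apply, titsReflection, Module.preReflection_apply,
    titsForm_single, map_sub, map_smul]

section Positivity

variable [PartialOrder K] [IsStrictOrderedRing K]

-- The second clause is what makes the induction go through: for non-adjacent `s` and `t` the
-- group `⟨s, t⟩` is infinite dihedral and `e s + e t` spans the radical of its form.
lemma titsRep_single_nonneg (w : W) (s : B) (hs : ¬ cs.IsRightDescent w s) :
    0 ≤ titsRep K cs w (Finsupp.single s 1) ∧
      ∀ t, t ≠ s → ¬ G.Adj s t → cs.IsRightDescent w t →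
        0 ≤ titsRep K cs w (Finsupp.single s 1) + titsRep K cs w (Finsupp.single t 1) := by
  induction hn : cs.length w generalizing w s with
  | zero =>
    rw [cs.length_eq_zero_iff] at hn
    subst hn
    refine ⟨?_, fun t _ _ ht => absurd ht (cs.not_isRightDescent_one t)⟩
    simp
  | succ n ih =>
    have nonadjacent : ∀ t, cs.IsRightDescent w t → ¬ G.Adj s t →
        0 ≤ titsRep K cs w (Finsupp.single s 1) ∧
        0 ≤ titsRep K cs w (Finsupp.single s 1) + titsRep K cs w (Finsupp.single t 1) := by
      intro t ht hadj
      have hts : t ≠ s := by rintro rfl; exact hs ht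
      obtain ⟨w', rfl, ht', hlen⟩ := exists_eq_mul_simple_of_isRightDescent cs ht
      have hadj' : ¬ G.Adj t s := fun h => hadj h.symm
      have hpos_t := (ih w' t ht' (by omega)).1
      have hpos_add : 0 ≤ titsRep K cs w' (Finsupp.single s 1) +
          titsRep K cs w' (Finsupp.single t 1) := by
        by_cases hd : cs.IsRightDescent w' s
        · exact ((ih w' t ht' (by omega)).2 s hts.symm hadj' hd).trans_eq (add_comm _ _)
        · exact add_nonneg (ih w' s hd (by omega)).1 hpos_t
      rw [titsRep_mul_simple_single, titsRep_mul_simple_single, titsCoeff_self,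
        titsCoeff_of_not_adj hts hadj']
      constructor
      · exact (add_nonneg hpos_add hpos_t).trans_eq (by module)
      · exact hpos_add.trans_eq (by module)
    refine ⟨?_, fun t _ hadj ht => (nonadjacent t ht hadj).2⟩
    obtain ⟨t, ht⟩ := cs.exists_rightDescent_of_ne_one (w := w) (by rintro rfl; simp at hn)
    by_cases hadj : G.Adj s t
    · obtain ⟨w', rfl, ht', hlen⟩ := exists_eq_mul_simple_of_isRightDescent cs ht
      rw [titsRep_mul_simple_single, titsCoeff_of_adj hadj.symm, zero_smul, sub_zero]
      exact (ih w' s (not_isRightDescent_mul_simple_of_adj cs hadj ht' hs) (by omega)).1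
    · exact (nonadjacent t ht hadj).1

theorem titsRep_injective : Function.Injective (titsRep K cs) := by
  rw [injective_iff_map_eq_one]
  intro w hw
  by_contra hne
  obtain ⟨t, ht⟩ := cs.exists_rightDescent_of_ne_one hne
  obtain ⟨w', rfl, ht', -⟩ := exists_eq_mul_simple_of_isRightDescent cs ht
  have hnonneg := (titsRep_single_nonneg K cs w' t ht').1
  have hneg : Finsupp.single t 1 = -titsRep K cs w' (Finsupp.single t 1) := by
    have h := titsRep_mul_simple_single K cs w' t t
    rw [hw, titsCoeff_self, Module.End.one_apply] at h
    exact h.trans (by module)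
  have hle : Finsupp.single t (1 : K) ≤ 0 := hneg ▸ neg_nonpos.2 hnonneg
  have hle_one : (1 : K) ≤ 0 := by simpa using hle t
  exact hle_one.not_gt one_pos

end Positivity

end TitsRepresentation

section ZariskiClosed

/-- `H` is closed in the Zariski topology that some faithful finite-dimensional complex
representation of `G` induces on `G`. -/
def IsFaithfullyZariskiClosed {G : Type*} [Group G] (H : Subgroup G) : Prop :=
  ∃ (n : ℕ) (ρ : G →* GL (Fin n) ℂ), 1 ≤ n ∧ Function.Injective ρ ∧
    ∀ γ : G, γ ∉ H → ∃ P : MvPolynomial (Fin n × Fin n) ℂ,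
      (∀ δ ∈ H, evalAtGL (ρ δ) P = 0) ∧ evalAtGL (ρ γ) P ≠ 0

lemma IsFaithfullyZariskiClosed.of_map {G G' : Type*} [Group G] [Group G'] {H : Subgroup G}
    {φ : G →* G'} (hφ : Function.Injective φ) (hH : IsFaithfullyZariskiClosed (H.map φ)) :
    IsFaithfullyZariskiClosed H := by
  obtain ⟨n, ρ, hn, hρ, hsep⟩ := hH
  refine ⟨n, ρ.comp φ, hn, hρ.comp hφ, fun γ hγ => ?_⟩
  obtain ⟨P, hP, hPγ⟩ := hsep (φ γ) (by rwa [Subgroup.mem_map_iff_mem hφ])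
  exact ⟨P, fun δ hδ => hP (φ δ) (Subgroup.mem_map_of_mem φ hδ), hPγ⟩

lemma exists_evalAtGL_eq_dual {n : ℕ} (l : Module.Dual ℂ (Matrix (Fin n) (Fin n) ℂ)) :
    ∃ P, ∀ A : GL (Fin n) ℂ, evalAtGL A P = l A := by
  refine ⟨∑ i, ∑ j, .C (l (Matrix.single i j 1)) * .X (i, j), fun A => ?_⟩
  conv_rhs => rw [Matrix.matrix_eq_sum_single (A : Matrix (Fin n) (Fin n) ℂ)]
  simp only [evalAtGL, map_sum, map_mul, MvPolynomial.eval_C, MvPolynomial.eval_X]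
  refine Finset.sum_congr rfl fun i _ => Finset.sum_congr rfl fun j _ => ?_
  rw [mul_comm, ← smul_eq_mul, ← map_smul, Matrix.smul_single, smul_eq_mul, mul_one]

lemma isFaithfullyZariskiClosed_of_dual {G M : Type*} [Group G] [AddCommGroup M] [Module ℂ M]
    [FiniteDimensional ℂ M] [Nontrivial M] {R : Representation ℂ G M}
    (hR : Function.Injective R) {H : Subgroup G}
    (hH : ∀ γ ∉ H, ∃ l : Module.Dual ℂ (Module.End ℂ M), (∀ δ ∈ H, l (R δ) = 0) ∧ l (R γ) ≠ 0) :
    IsFaithfullyZariskiClosed H := by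
  let e := LinearMap.toMatrixAlgEquiv (Module.finBasis ℂ M)
  let ρ : G →* GL (Fin (Module.finrank ℂ M)) ℂ :=
    ((e : Module.End ℂ M →* Matrix _ _ ℂ).comp R).toHomUnits
  have hρ : ∀ x, (ρ x : Matrix _ _ ℂ) = e (R x) := fun x => rfl
  refine ⟨_, ρ, Module.finrank_pos, fun x y hxy => hR (e.injective ?_), fun γ hγ => ?_⟩
  · rw [← hρ, ← hρ, hxy]
  · obtain ⟨l, hl, hlγ⟩ := hH γ hγ
    obtain ⟨P, hP⟩ := exists_evalAtGL_eq_dual (l ∘ₗ e.symm.toLinearMap)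
    have hPl : ∀ x, evalAtGL (ρ x) P = l (R x) := fun x => by simp [hP, hρ]
    exact ⟨P, fun δ hδ => by rw [hPl, hl δ hδ], by rwa [hPl]⟩

end ZariskiClosed

section VirtualRetract

/-- `H` is a virtual retract of `G`: some finite-index subgroup `K` containing `H` admits a
homomorphism onto `H` that is the identity on `H`. -/
def IsVirtualRetract {G : Type*} [Group G] (H : Subgroup G) : Prop :=
  ∃ (K : Subgroup G) (r : K →* G), K.FiniteIndex ∧ H ≤ K ∧ (∀ k, r k ∈ H) ∧
    ∀ k : K, (k : G) ∈ H → r k = k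

variable {F G V : Type*} [Field F] [Group G] [AddCommGroup V] [Module F V] {K : Subgroup G}
variable (σ : Representation F K V)

instance finiteDimensional_coindV [K.FiniteIndex] [FiniteDimensional F V] :
    FiniteDimensional F (Representation.coindV K.subtype σ) := by
  let ev : Representation.coindV K.subtype σ →ₗ[F] (G ⧸ K) → V :=
    LinearMap.funLeft F V (fun q : G ⧸ K => q.out⁻¹) ∘ₗ Submodule.subtype _
  refine Module.Finite.of_injective ev ((injective_iff_map_eq_zero _).2 fun f hf => ?_)
  ext g
  obtain ⟨k, hk⟩ := QuotientGroup.mk_out_eq_mul K g⁻¹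
  have hg : g = K.subtype k * (QuotientGroup.mk (s := K) g⁻¹).out⁻¹ := by simp [hk]
  have hzero : f.1 (QuotientGroup.mk (s := K) g⁻¹).out⁻¹ = 0 := congrFun hf (QuotientGroup.mk g⁻¹)
  rw [hg, f.2, hzero, map_zero]
  rfl

open Classical in
/-- The vector of the representation coinduced from `K` given by the `K`-equivariant function
that is supported on `K` and takes the value `v` at `1`. -/
noncomputable def coindSingle (v : V) : Representation.coindV K.subtype σ where
  val g := if hg : g ∈ K then σ ⟨g, hg⟩ v else 0
  property k g := by
    by_cases hg : g ∈ K
    · have hkg : K.subtype k * g ∈ K := K.mul_mem k.2 hg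
      simp only [dif_pos hg, dif_pos hkg]
      exact congrArg (· v) (map_mul σ k ⟨g, hg⟩)
    · simp [K.mul_mem_cancel_left k.2, hg]

/-- For `T` a representation of `G`, the linear map sending an endomorphism `(A, B)` of
`coind σ × T` to `A (coindSingle σ v) 1 - B v`; it compares `σ` on `K` with `T`. -/
noncomputable def coindDefect (v : V) :
    Module.End F (Representation.coindV K.subtype σ × V) →ₗ[F] V :=
  (LinearMap.proj (φ := fun _ : G => V) 1 ∘ₗ Submodule.subtype _ ∘ₗ LinearMap.fst F _ V -
      LinearMap.snd F _ V) ∘ₗ LinearMap.applyₗ (coindSingle σ v, v)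

open Classical in
lemma coindDefect_apply (T : Representation F G V) (v : V) (g : G) :
    coindDefect σ v ((Representation.coind K.subtype σ).prod T g) =
      (if hg : g ∈ K then σ ⟨g, hg⟩ else 0) v - T g v := by
  have hcoind : (Representation.coind K.subtype σ g (coindSingle σ v)).1 1 =
      (coindSingle σ v).1 g := congrArg (coindSingle σ v).1 (one_mul g)
  have hdefect : coindDefect σ v ((Representation.coind K.subtype σ).prod T g) =
      (Representation.coind K.subtype σ g (coindSingle σ v)).1 1 - T g v := rfl
  rw [hdefect, hcoind, coindSingle]
  by_cases hg : g ∈ K <;> simp [hg]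

lemma IsVirtualRetract.isFaithfullyZariskiClosed [Module ℂ V] [FiniteDimensional ℂ V]
    [Nontrivial V] {H : Subgroup G} (hH : IsVirtualRetract H) {T : Representation ℂ G V}
    (hT : Function.Injective T) : IsFaithfullyZariskiClosed H := by
  classical
  obtain ⟨K, r, hK, hle, hmem, hid⟩ := hH
  let σ : Representation ℂ K V := T.comp r
  refine isFaithfullyZariskiClosed_of_dual (R := (Representation.coind K.subtype σ).prod T)
    (fun x y hxy => hT ?_) fun γ hγ => ?_
  · ext v
    exact congrArg (fun E => (E (0, v)).2) hxy
  · have hne : (if hg : γ ∈ K then σ ⟨γ, hg⟩ else 0) ≠ T γ := by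
      split_ifs with hg
      · exact fun h => hγ (hT h ▸ hmem _)
      · exact ((Group.isUnit γ).map T).ne_zero.symm
    obtain ⟨v, hv⟩ := DFunLike.exists_ne hne
    obtain ⟨l, hl⟩ : ∃ l : Module.Dual ℂ V, l _ ≠ 0 := not_forall.1 <|
      (Module.forall_dual_apply_eq_zero_iff ℂ _).not.2 (sub_ne_zero.2 hv)
    refine ⟨l ∘ₗ coindDefect σ v, fun δ hδ => ?_, ?_⟩
    · have hσ : σ ⟨δ, hle hδ⟩ = T δ := congrArg T (hid ⟨δ, hle hδ⟩ hδ)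
      rw [LinearMap.comp_apply, coindDefect_apply, dif_pos (hle hδ), hσ, sub_self, map_zero]
    · rwa [LinearMap.comp_apply, coindDefect_apply]

end VirtualRetract

lemma ncard_pair_le {α : Type*} (a b : α) : ({a, b} : Set α).ncard ≤ 2 := by
  simpa using Set.ncard_insert_le a ({b} : Set α)

/-- A graph on the vertices `V` with undirected edges labelled by `B` that is folded in the sense
of Stallings: every vertex lies on at most one edge with a given label. Loops are allowed. -/
structure FoldedGraph (B V : Type*) where
  Adj : B → V → V → Prop
  symm : ∀ {s x y}, Adj s x y → Adj s y x
  det : ∀ {s x y y'}, Adj s x y → Adj s x y' → y = y'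

namespace FoldedGraph

variable {B V V' : Type*}

/-- Some edge at `x` is labelled `s`. -/
def HasEdge (Y : FoldedGraph B V) (s : B) (x : V) : Prop := ∃ y, Y.Adj s x y

/-- The pairs of a vertex and the label of an edge at that vertex. -/
def darts (Y : FoldedGraph B V) : Set (V × B) := {q | Y.HasEdge q.2 q.1}

/-- The non-isolated vertices. -/
def support (Y : FoldedGraph B V) : Set V := {x | ∃ s, Y.HasEdge s x}

/-- `x, a, z, b` are the consecutive corners of a square with sides labelled `s, t, s, t`; the
square may be degenerate. -/
structure Square (Y : FoldedGraph B V) (s t : B) (x a b z : V) : Prop where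
  bottom : Y.Adj s x a
  left : Y.Adj t x b
  right : Y.Adj t a z
  top : Y.Adj s b z

/-- Some square with sides `s` and `t` has a corner at `x`. -/
def Filled (Y : FoldedGraph B V) (x : V) (s t : B) : Prop := ∃ a b z, Y.Square s t x a b z

/-- The walks of `Y` from `x` to `y` spell `w`, where `r` gives the meaning of the labels and
words are read from right to left. -/
inductive Walk {M : Type*} [Monoid M] (Y : FoldedGraph B V) (r : B → M) : M → V → V → Prop
  | refl (x : V) : Walk Y r 1 x x
  | step {w : M} {s : B} {x y z : V} : Walk Y r w x y → Y.Adj s y z → Walk Y r (r s * w) x z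

section Walks

variable {M : Type*} [Monoid M] {Y : FoldedGraph B V} {r : B → M}

lemma Walk.trans {w w' : M} {x y z : V} (h : Y.Walk r w x y) (h' : Y.Walk r w' y z) :
    Y.Walk r (w' * w) x z := by
  induction h' with
  | refl => rwa [one_mul]
  | step _ hadj ih => rw [mul_assoc]; exact (ih h).step hadj

lemma Walk.mono {Y' : FoldedGraph B V'} {φ : V → V'}
    (hφ : ∀ {s x y}, Y.Adj s x y → Y'.Adj s (φ x) (φ y)) {w : M} {x y : V} (h : Y.Walk r w x y) :
    Y'.Walk r w (φ x) (φ y) := by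
  induction h with
  | refl => exact .refl _
  | step _ hadj ih => exact ih.step (hφ hadj)

lemma Walk.symm {M : Type*} [Group M] {r : B → M} (hr : ∀ s, (r s)⁻¹ = r s) {w : M} {x y : V}
    (h : Y.Walk r w x y) : Y.Walk r w⁻¹ y x := by
  induction h with
  | refl => rw [inv_one]; exact .refl _
  | @step w s _ y z _ hadj ih =>
    have hedge : Y.Walk r (r s * 1) z y := (Walk.refl z).step (Y.symm hadj)
    rw [mul_inv_rev, hr]
    simpa only [mul_one] using hedge.trans ih

/-- The subgroup of the elements spelled by the closed walks of `Y` at `x`. -/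
def loops {M : Type*} [Group M] (Y : FoldedGraph B V) {r : B → M} (hr : ∀ s, (r s)⁻¹ = r s)
    (x : V) : Subgroup M where
  carrier := {w | Y.Walk r w x x}
  one_mem' := .refl x
  mul_mem' h h' := h'.trans h
  inv_mem' := .symm hr

end Walks

section Squares

variable {Y : FoldedGraph B V} {s t : B} {x a b z : V}

lemma Square.swap (h : Y.Square s t x a b z) : Y.Square t s x b a z :=
  ⟨h.left, h.bottom, h.top, h.right⟩

lemma Square.flip (h : Y.Square s t x a b z) : Y.Square s t a x z b :=
  ⟨Y.symm h.bottom, h.right, h.left, Y.symm h.top⟩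

lemma Square.filled_of_mem (h : Y.Square s t x a b z) {y : V} (hy : y ∈ ({x, a} ∪ {b, z} : Set V)) :
    Y.Filled y s t := by
  rcases hy with (rfl | rfl) | (rfl | rfl)
  · exact ⟨_, _, _, h⟩
  · exact ⟨_, _, _, h.flip⟩
  · exact ⟨_, _, _, h.swap.flip.swap⟩
  · exact ⟨_, _, _, h.flip.swap.flip.swap⟩

lemma Filled.swap (h : Y.Filled x s t) : Y.Filled x t s :=
  let ⟨_, _, _, hsq⟩ := h
  ⟨_, _, _, hsq.swap⟩

lemma Filled.mono {Y' : FoldedGraph B V'} {φ : V → V'}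
    (hφ : ∀ {s x y}, Y.Adj s x y → Y'.Adj s (φ x) (φ y)) (h : Y.Filled x s t) :
    Y'.Filled (φ x) s t :=
  let ⟨_, _, _, hsq⟩ := h
  ⟨_, _, _, hφ hsq.bottom, hφ hsq.left, hφ hsq.right, hφ hsq.top⟩

lemma Filled.hasEdge_left (h : Y.Filled x s t) : Y.HasEdge s x :=
  let ⟨_, _, _, hsq⟩ := h
  ⟨_, hsq.bottom⟩

lemma Filled.hasEdge_of_adj (h : Y.Filled x s t) (hxb : Y.Adj t x b) : Y.HasEdge s b := by
  obtain ⟨a, b', z, hsq⟩ := h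
  exact ⟨z, Y.det hxb hsq.left ▸ hsq.top⟩

end Squares

section Boundary

variable (G : SimpleGraph B)

/-- The corners `(x, s, t)` with `s` and `t` adjacent in `G` and an `s`-edge at `x` that are not
filled by a square; their number measures the length of the boundary of `Y`. -/
def boundary (Y : FoldedGraph B V) : Set (V × B × B) :=
  {q | G.Adj q.2.1 q.2.2 ∧ Y.HasEdge q.2.1 q.1 ∧ ¬ Y.Filled q.1 q.2.1 q.2.2}

variable {G} in
lemma forall_hasEdge_of_forall_notMem_boundary (hG : G.Preconnected) {Y : FoldedGraph B V} {x : V}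
    (hx : x ∈ Y.support) (hbd : ∀ s t, (x, s, t) ∉ Y.boundary G) (s : B) : Y.HasEdge s x := by
  obtain ⟨s₀, hs₀⟩ := hx
  obtain ⟨p⟩ := hG s₀ s
  induction p with
  | nil => exact hs₀
  | cons hadj _ ih =>
    refine ih (by_contra fun hv => hbd _ _ ⟨hadj, hs₀, fun hfill => hv ?_⟩)
    exact hfill.swap.hasEdge_left

variable {G} in
lemma ncard_support_le [Finite V] [Finite B] (hG : G.Preconnected) (Y : FoldedGraph B V) :
    Nat.card B * Y.support.ncard ≤ Y.darts.ncard + Nat.card B * (Y.boundary G).ncard := by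
  let bad : Set V := Prod.fst '' Y.boundary G
  have hdarts : (Y.support \ bad) ×ˢ (Set.univ : Set B) ⊆ Y.darts := by
    rintro ⟨x, s⟩ ⟨⟨hx, hbad⟩, -⟩
    exact forall_hasEdge_of_forall_notMem_boundary hG hx (fun s t h => hbad ⟨_, h, rfl⟩) s
  have hdarts_le := Set.ncard_le_ncard hdarts (Set.toFinite _)
  rw [Set.ncard_prod, Set.ncard_univ] at hdarts_le
  have hbad_le : bad.ncard ≤ (Y.boundary G).ncard := Set.ncard_image_le (Set.toFinite _)
  have hsplit := Set.ncard_le_ncard_sdiff_add_ncard Y.support bad (Set.toFinite _)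
  nlinarith

end Boundary

section Map

variable (G : SimpleGraph B) (Y : FoldedGraph B V) (φ : V → V')
variable (hφ : ∀ ⦃s x x' y y'⦄, Y.Adj s x y → Y.Adj s x' y' → φ x = φ x' → φ y = φ y')

/-- The image of `Y` under a map of the vertices that respects foldedness. -/
def map : FoldedGraph B V' where
  Adj s := Relation.Map (Y.Adj s) φ φ
  symm := fun ⟨x, y, h, hx, hy⟩ => ⟨y, x, Y.symm h, hy, hx⟩
  det := by
    rintro s p q q' ⟨x, y, h, rfl, rfl⟩ ⟨x', y', h', hx, rfl⟩
    exact hφ h h' hx.symm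

lemma map_adj {s : B} {x y : V} (h : Y.Adj s x y) : (Y.map φ hφ).Adj s (φ x) (φ y) :=
  ⟨x, y, h, rfl, rfl⟩

lemma hasEdge_map_iff {s : B} {p : V'} :
    (Y.map φ hφ).HasEdge s p ↔ ∃ x, Y.HasEdge s x ∧ φ x = p := by
  constructor
  · rintro ⟨_, x, y, h, rfl, rfl⟩
    exact ⟨x, ⟨y, h⟩, rfl⟩
  · rintro ⟨x, ⟨y, h⟩, rfl⟩
    exact ⟨φ y, Y.map_adj φ hφ h⟩

lemma darts_map : (Y.map φ hφ).darts = Prod.map φ id '' Y.darts := by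
  ext ⟨p, s⟩
  simp [darts, hasEdge_map_iff]

lemma boundary_map_subset : (Y.map φ hφ).boundary G ⊆ Prod.map φ id '' Y.boundary G := by
  rintro ⟨p, s, t⟩ ⟨hst, ⟨_, x, y, h, rfl, rfl⟩, hfill⟩
  exact ⟨(x, s, t), ⟨hst, ⟨y, h⟩, fun hf => hfill (hf.mono (φ := φ) (Y.map_adj φ hφ))⟩, rfl⟩

variable [Finite B] [Finite V]

lemma ncard_boundary_map_le : ((Y.map φ hφ).boundary G).ncard ≤ (Y.boundary G).ncard :=
  (Set.ncard_le_ncard (Y.boundary_map_subset G φ hφ) (Set.toFinite _)).trans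
    (Set.ncard_image_le (Set.toFinite _))

lemma ncard_boundary_map_lt {x : V} {s t : B} (hx : (x, s, t) ∈ Y.boundary G)
    (hfill : (Y.map φ hφ).Filled (φ x) s t) :
    ((Y.map φ hφ).boundary G).ncard < (Y.boundary G).ncard := by
  have hsub : (Y.map φ hφ).boundary G ⊆ Prod.map φ id '' (Y.boundary G \ {(x, s, t)}) := by
    intro p hp
    obtain ⟨q, hq, rfl⟩ := Y.boundary_map_subset G φ hφ hp
    refine ⟨q, ⟨hq, ?_⟩, rfl⟩
    rintro rfl
    exact hp.2.2 hfill
  calc _ ≤ (Prod.map φ id '' (Y.boundary G \ {(x, s, t)})).ncard :=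
        Set.ncard_le_ncard hsub (Set.toFinite _)
    _ ≤ (Y.boundary G \ {(x, s, t)}).ncard := Set.ncard_image_le (Set.toFinite _)
    _ < (Y.boundary G).ncard := Set.ncard_sdiff_singleton_lt_of_mem hx (Set.toFinite _)

lemma ncard_darts_map_le : (Y.map φ hφ).darts.ncard ≤ Y.darts.ncard := by
  rw [darts_map]
  exact Set.ncard_image_le (Set.toFinite _)

end Map

section AddEdge

variable (Y : FoldedGraph B V) {s : B} {z b : V} (hz : ¬ Y.HasEdge s z) (hb : ¬ Y.HasEdge s b)

/-- The graph obtained from `Y` by joining `z` and `b` by an edge labelled `s`. -/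
def addEdge : FoldedGraph B V where
  Adj s' p q := Y.Adj s' p q ∨ s' = s ∧ s(p, q) = s(z, b)
  symm := Or.imp Y.symm fun ⟨hs, hpq⟩ => ⟨hs, Sym2.eq_swap.trans hpq⟩
  det := by
    have hnew : ∀ {p q q'}, s(p, q) = s(z, b) → ¬ Y.Adj s p q' := by
      intro p q q' hpq h
      rcases Sym2.eq_iff.1 hpq with ⟨rfl, -⟩ | ⟨rfl, -⟩
      exacts [hz ⟨q', h⟩, hb ⟨q', h⟩]
    rintro s' p q q' (h | ⟨rfl, h⟩) (h' | ⟨hs, h'⟩)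
    · exact Y.det h h'
    · exact absurd (hs ▸ h) (hnew h')
    · exact absurd h' (hnew h)
    · exact Sym2.congr_right.1 (h.trans h'.symm)

variable {Y}

lemma addEdge_adj {s' : B} {x y : V} (h : Y.Adj s' x y) : (Y.addEdge hz hb).Adj s' x y := .inl h

lemma addEdge_adj_new : (Y.addEdge hz hb).Adj s z b := .inr ⟨rfl, rfl⟩

lemma hasEdge_addEdge {s' : B} {x : V} (h : (Y.addEdge hz hb).HasEdge s' x) :
    Y.HasEdge s' x ∨ s' = s ∧ x ∈ ({b, z} : Set V) := by
  obtain ⟨y, h | ⟨rfl, h⟩⟩ := h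
  · exact .inl ⟨y, h⟩
  · rcases Sym2.eq_iff.1 h with ⟨rfl, -⟩ | ⟨rfl, -⟩ <;> simp

lemma boundary_addEdge_subset (G : SimpleGraph B) :
    (Y.addEdge hz hb).boundary G ⊆ Y.boundary G ∪ {b, z} ×ˢ {s} ×ˢ G.neighborSet s := by
  rintro ⟨y, s', r⟩ ⟨hadj, hedge, hfill⟩
  rcases hasEdge_addEdge hz hb hedge with h | ⟨rfl, hy⟩
  · exact .inl ⟨hadj, h, fun hf => hfill (hf.mono (φ := id) (addEdge_adj hz hb))⟩
  · exact .inr ⟨hy, rfl, hadj⟩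

variable [Finite B] [Finite V]

lemma ncard_darts_addEdge_le : (Y.addEdge hz hb).darts.ncard ≤ Y.darts.ncard + 2 := by
  have hsub : (Y.addEdge hz hb).darts ⊆ Y.darts ∪ {b, z} ×ˢ {s} := by
    rintro ⟨x, s'⟩ hx
    exact hasEdge_addEdge hz hb hx |>.imp id And.symm
  have hle := (Set.ncard_le_ncard hsub (Set.toFinite _)).trans (Set.ncard_union_le _ _)
  rw [Set.ncard_prod, Set.ncard_singleton, mul_one] at hle
  have hpair := ncard_pair_le b z
  omega

variable {G : SimpleGraph B} (hG : ∀ s, (G.neighborSet s).ncard ≤ 2)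
include hG

lemma ncard_boundary_addEdge_le :
    ((Y.addEdge hz hb).boundary G).ncard ≤ (Y.boundary G).ncard + 4 := by
  have hle := (Set.ncard_le_ncard (boundary_addEdge_subset hz hb G) (Set.toFinite _)).trans
    (Set.ncard_union_le _ _)
  rw [Set.ncard_prod, Set.ncard_prod, Set.ncard_singleton, one_mul] at hle
  have hmul := Nat.mul_le_mul (ncard_pair_le b z) (hG s)
  omega

-- The only new dart labels are `s` at `{b, z}`, while all the corners between `s` and `t` at
-- `{x, a} ∪ {b, z}` become filled.
lemma ncard_boundary_addEdge_add_le {t : B} {x a : V} (hst : G.Adj s t) (hxa : Y.Adj s x a)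
    (hxb : Y.Adj t x b) (haz : Y.Adj t a z) :
    ((Y.addEdge hz hb).boundary G).ncard + 2 * ({x, a} : Set V).ncard ≤ (Y.boundary G).ncard := by
  have hsq : (Y.addEdge hz hb).Square s t x a b z :=
    ⟨.inl hxa, .inl hxb, .inl haz, (Y.addEdge hz hb).symm (addEdge_adj_new hz hb)⟩
  have hP : ∀ y ∈ ({x, a} : Set V), Y.HasEdge s y ∧ ¬ Y.Filled y s t ∧ Y.HasEdge t y := by
    rintro y (rfl | rfl)
    · exact ⟨⟨_, hxa⟩, fun h => hb (h.hasEdge_of_adj hxb), ⟨_, hxb⟩⟩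
    · exact ⟨⟨_, Y.symm hxa⟩, fun h => hz (h.hasEdge_of_adj haz), ⟨_, haz⟩⟩
  have hQ : ∀ y ∈ ({b, z} : Set V), ¬ Y.HasEdge s y ∧ Y.HasEdge t y := by
    rintro y (rfl | rfl)
    · exact ⟨hb, ⟨_, Y.symm hxb⟩⟩
    · exact ⟨hz, ⟨_, Y.symm haz⟩⟩
  have hPQ : Disjoint ({x, a} : Set V) {b, z} :=
    Set.disjoint_left.2 fun y hyP hyQ => (hQ y hyQ).1 (hP y hyP).1
  let filled : Set (V × B × B) := ({x, a} ∪ {b, z}) ×ˢ {(s, t), (t, s)}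
  have hdisj : Disjoint ((Y.addEdge hz hb).boundary G) filled := by
    rw [Set.disjoint_left]
    rintro ⟨y, _⟩ hy ⟨hyPQ, rfl | rfl⟩
    · exact hy.2.2 (hsq.filled_of_mem hyPQ)
    · exact hy.2.2 (hsq.filled_of_mem hyPQ).swap
  have hsub : (Y.addEdge hz hb).boundary G ∪ filled ⊆
      Y.boundary G ∪ {b, z} ×ˢ {s} ×ˢ G.neighborSet s := by
    refine Set.union_subset (boundary_addEdge_subset hz hb G) ?_
    rintro ⟨y, _⟩ ⟨hy | hy, rfl | rfl⟩
    · exact .inl ⟨hst, (hP y hy).1, (hP y hy).2.1⟩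
    · exact .inl ⟨hst.symm, (hP y hy).2.2, fun h => (hP y hy).2.1 h.swap⟩
    · exact .inr ⟨hy, rfl, hst⟩
    · exact .inl ⟨hst.symm, (hQ y hy).2, fun h => (hQ y hy).1 h.swap.hasEdge_left⟩
  have hle := (Set.ncard_le_ncard hsub (Set.toFinite _)).trans (Set.ncard_union_le _ _)
  have hne : (s, t) ≠ (t, s) := fun h => hst.ne (congrArg Prod.fst h)
  rw [Set.ncard_union_eq hdisj, Set.ncard_prod, Set.ncard_union_eq hPQ, Set.ncard_pair hne,
    Set.ncard_prod, Set.ncard_prod, Set.ncard_singleton, one_mul] at hle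
  have hmul := Nat.mul_le_mul_left ({b, z} : Set V).ncard (hG s)
  omega

end AddEdge

section AddSquare

variable (Y : FoldedGraph B V)

lemma some_eq_of_adj ⦃s : B⦄ ⦃x x' y y' : V⦄ (h : Y.Adj s x y) (h' : Y.Adj s x' y')
    (hx : some x = some x') : some y = some y' :=
  congrArg some (Y.det h (Option.some_injective _ hx ▸ h'))

/-- The graph obtained from `Y` by adding the isolated vertex `none`. -/
def addVertex : FoldedGraph B (Option V) := Y.map some Y.some_eq_of_adj

lemma hasEdge_addVertex_some {s : B} {x : V} :
    Y.addVertex.HasEdge s (some x) ↔ Y.HasEdge s x := by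
  simp [addVertex, hasEdge_map_iff]

lemma not_hasEdge_addVertex_none (s : B) : ¬ Y.addVertex.HasEdge s none := by
  simp [addVertex, hasEdge_map_iff]

variable {Y} {s t : B} (hst : s ≠ t) {x a b : V} (ha : ¬ Y.HasEdge t a) (hb : ¬ Y.HasEdge s b)

include hst in
lemma hasEdge_of_addVertex_addEdge {p : Option V}
    (h : (Y.addVertex.addEdge (mt Y.hasEdge_addVertex_some.1 ha)
      (Y.not_hasEdge_addVertex_none t)).HasEdge s p) : Y.addVertex.HasEdge s p :=
  (hasEdge_addEdge _ _ h).resolve_right (hst ·.1)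

/-- The graph obtained from `Y` by adding a new vertex, joining it to `a` by an edge labelled `t`
and to `b` by an edge labelled `s`. -/
def addSquare : FoldedGraph B (Option V) :=
  (Y.addVertex.addEdge (mt Y.hasEdge_addVertex_some.1 ha)
    (Y.not_hasEdge_addVertex_none t)).addEdge (z := none) (b := some b)
    (mt (hasEdge_of_addVertex_addEdge hst ha) (Y.not_hasEdge_addVertex_none s))
    (mt (hasEdge_of_addVertex_addEdge hst ha) (mt Y.hasEdge_addVertex_some.1 hb))

variable [Finite V]

lemma ncard_support_add_one_le_addSquare :
    Y.support.ncard + 1 ≤ (addSquare hst ha hb).support.ncard := by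
  have hsub : insert none (some '' Y.support) ⊆ (addSquare hst ha hb).support := by
    rintro _ (rfl | ⟨y, ⟨r, c, hc⟩, rfl⟩)
    · exact ⟨s, _, addEdge_adj_new _ _⟩
    · exact ⟨r, some c, addEdge_adj _ _ (addEdge_adj _ _ (Y.map_adj some Y.some_eq_of_adj hc))⟩
  have hle := Set.ncard_le_ncard hsub (Set.toFinite _)
  rwa [Set.ncard_insert_of_notMem (by simp),
    Set.ncard_image_of_injective _ (Option.some_injective _)] at hle

variable [Finite B]

lemma ncard_darts_addSquare_le : (addSquare hst ha hb).darts.ncard ≤ Y.darts.ncard + 4 :=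
  calc (addSquare hst ha hb).darts.ncard ≤ Y.addVertex.darts.ncard + 2 + 2 :=
        (ncard_darts_addEdge_le _ _).trans (Nat.add_le_add_right (ncard_darts_addEdge_le _ _) 2)
    _ ≤ Y.darts.ncard + 4 := Nat.add_le_add_right (Y.ncard_darts_map_le some _) 4

lemma ncard_boundary_addSquare_le {G : SimpleGraph B} (hG : ∀ s, (G.neighborSet s).ncard ≤ 2)
    (hadj : G.Adj s t) (hxa : Y.Adj s x a) (hxb : Y.Adj t x b) :
    ((addSquare hadj.ne ha hb).boundary G).ncard ≤ (Y.boundary G).ncard := by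
  have hne : some x ≠ some a := fun h => ha ⟨b, Option.some_injective _ h ▸ hxb⟩
  have hmap : (Y.addVertex.boundary G).ncard ≤ (Y.boundary G).ncard :=
    Y.ncard_boundary_map_le G some Y.some_eq_of_adj
  have hfirst := ncard_boundary_addEdge_le (mt Y.hasEdge_addVertex_some.1 ha)
    (Y.not_hasEdge_addVertex_none t) hG
  have hsecond := ncard_boundary_addEdge_add_le
    (mt (hasEdge_of_addVertex_addEdge hadj.ne ha) (Y.not_hasEdge_addVertex_none s))
    (mt (hasEdge_of_addVertex_addEdge hadj.ne ha) (mt Y.hasEdge_addVertex_some.1 hb)) hG hadj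
    (addEdge_adj _ _ (Y.map_adj some Y.some_eq_of_adj hxa))
    (addEdge_adj _ _ (Y.map_adj some Y.some_eq_of_adj hxb)) (addEdge_adj_new _ _)
  rw [Set.ncard_pair hne] at hsecond
  rw [addSquare]
  omega

end AddSquare

end FoldedGraph

namespace FoldedGraph

variable {B V : Type*}

/-- Any two edges of `Y` at a common vertex whose labels are adjacent in `G` span a square. -/
def IsSquareClosed (G : SimpleGraph B) (Y : FoldedGraph B V) : Prop :=
  ∀ {x s t}, G.Adj s t → Y.HasEdge s x → Y.HasEdge t x → Y.Filled x s t

end FoldedGraph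

section CarrierGraphs

universe u v

variable {B : Type u} [DecidableEq B] {G : SimpleGraph B} [DecidableRel G.Adj]
  {W : Type v} [Group W]

/-- A finite folded graph mapping to the Schreier graph of `W ⧸ H` whose closed walks at the base
point spell all the elements of `H`. -/
structure CarrierGraph (cs : CoxeterSystem (racMatrix G) W) (H : Subgroup W) where
  Vertex : Type v
  finite : Finite Vertex
  graph : FoldedGraph B Vertex
  toCoset : Vertex → W ⧸ H
  toCoset_adj : ∀ {s x y}, graph.Adj s x y → toCoset y = cs.simple s • toCoset x
  base : Vertex
  toCoset_base : toCoset base = (1 : W)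
  carries : ∀ h ∈ H, graph.Walk cs.simple h base base

namespace CarrierGraph

attribute [instance] CarrierGraph.finite

variable {cs : CoxeterSystem (racMatrix G) W} {H : Subgroup W} (Y : CarrierGraph cs H)

/-- The carrier graph obtained by mapping the vertices of `Y` to another finite set. -/
def map {V : Type v} [Finite V] (φ : Y.Vertex → V)
    (hφ : ∀ ⦃s x x' y y'⦄, Y.graph.Adj s x y → Y.graph.Adj s x' y' → φ x = φ x' → φ y = φ y')
    (f : V → W ⧸ H) (hf : ∀ x, f (φ x) = Y.toCoset x) : CarrierGraph cs H where
  Vertex := V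
  finite := ‹_›
  graph := Y.graph.map φ hφ
  toCoset := f
  toCoset_adj := by
    rintro s _ _ ⟨x, y, h, rfl, rfl⟩
    rw [hf, hf, Y.toCoset_adj h]
  base := φ Y.base
  toCoset_base := by rw [hf, Y.toCoset_base]
  carries h hh := (Y.carries h hh).mono (Y.graph.map_adj φ hφ)

lemma rangeFactorization_eq_of_adj ⦃s : B⦄ ⦃x x' y y' : Y.Vertex⦄ (h : Y.graph.Adj s x y)
    (h' : Y.graph.Adj s x' y')
    (hx : Set.rangeFactorization Y.toCoset x = Set.rangeFactorization Y.toCoset x') :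
    Set.rangeFactorization Y.toCoset y = Set.rangeFactorization Y.toCoset y' := by
  rw [Subtype.ext_iff] at hx ⊢
  exact (Y.toCoset_adj h).trans ((congrArg _ hx).trans (Y.toCoset_adj h').symm)

/-- The image of `Y` in the Schreier graph. -/
def fold : CarrierGraph cs H :=
  Y.map _ Y.rangeFactorization_eq_of_adj Subtype.val fun _ => rfl

/-- The carrier graph obtained by adding an isolated vertex over the coset `p`. -/
def addVertex (p : W ⧸ H) : CarrierGraph cs H :=
  Y.map some Y.graph.some_eq_of_adj (Option.elim · p Y.toCoset) fun _ => rfl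

/-- The carrier graph obtained by joining `z` and `b` by an edge labelled `s`. -/
def addEdge {s : B} {z b : Y.Vertex} (hz : ¬ Y.graph.HasEdge s z) (hb : ¬ Y.graph.HasEdge s b)
    (hzb : Y.toCoset b = cs.simple s • Y.toCoset z) : CarrierGraph cs H where
  Vertex := Y.Vertex
  finite := Y.finite
  graph := Y.graph.addEdge hz hb
  toCoset := Y.toCoset
  toCoset_adj := by
    rintro s' p q (h | ⟨rfl, h⟩)
    · exact Y.toCoset_adj h
    · rcases Sym2.eq_iff.1 h with ⟨rfl, rfl⟩ | ⟨rfl, rfl⟩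
      · exact hzb
      · rw [hzb, smul_smul, cs.simple_mul_simple_self, one_smul]
  base := Y.base
  toCoset_base := Y.toCoset_base
  carries h hh := (Y.carries h hh).mono (FoldedGraph.addEdge_adj hz hb)

/-- The pair of the length of the boundary and the area of `Y`, compared lexicographically. The
area is measured by counting negatively the edge ends missing at the non-isolated vertices, and is
shifted by a multiple of the length to be nonnegative. -/
noncomputable def complexity : ℕ ×ₗ ℕ :=
  toLex ((Y.graph.boundary G).ncard,
    Y.graph.darts.ncard + Nat.card B * (Y.graph.boundary G).ncard -
      Nat.card B * Y.graph.support.ncard)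

variable {Y} {s t : B} {x a b z : Y.Vertex}

lemma complexity_lt_of_ncard_boundary_lt {Y' : CarrierGraph cs H}
    (h : (Y'.graph.boundary G).ncard < (Y.graph.boundary G).ncard) :
    Y'.complexity < Y.complexity :=
  Prod.Lex.toLex_lt_toLex.2 (.inl h)

lemma simple_smul_simple_smul_comm (hst : G.Adj s t) (p : W ⧸ H) :
    cs.simple s • cs.simple t • p = cs.simple t • cs.simple s • p := by
  rw [smul_smul, (commute_simple_of_adj cs hst).eq, mul_smul]

lemma adj_fold (h : Y.graph.Adj s x a) {y y' : Y.Vertex} (hy : Y.toCoset y = Y.toCoset x)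
    (hy' : Y.toCoset y' = Y.toCoset a) :
    Y.fold.graph.Adj s (Set.rangeFactorization Y.toCoset y)
      (Set.rangeFactorization Y.toCoset y') :=
  ⟨x, a, h, Subtype.ext hy.symm, Subtype.ext hy'.symm⟩

variable [Finite B]

lemma complexity_fold_lt (hst : G.Adj s t) (hfill : ¬ Y.graph.Filled x s t)
    (hxa : Y.graph.Adj s x a) (hxb : Y.graph.Adj t x b) (haz : Y.graph.Adj t a z)
    (hbz : Y.graph.HasEdge s z ∨ Y.graph.HasEdge s b) : Y.fold.complexity < Y.complexity := by
  have hz : Y.toCoset z = cs.simple s • Y.toCoset b := by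
    rw [Y.toCoset_adj haz, Y.toCoset_adj hxa, Y.toCoset_adj hxb, simple_smul_simple_smul_comm hst]
  refine complexity_lt_of_ncard_boundary_lt <|
    Y.graph.ncard_boundary_map_lt G _ Y.rangeFactorization_eq_of_adj ⟨hst, ⟨a, hxa⟩, hfill⟩
      ⟨_, _, _, adj_fold hxa rfl rfl, adj_fold hxb rfl rfl, adj_fold haz rfl rfl, ?_⟩
  rcases hbz with ⟨c, hc⟩ | ⟨c, hc⟩
  · refine Y.fold.graph.symm (adj_fold hc rfl ?_)
    rw [Y.toCoset_adj hc, hz, smul_smul, cs.simple_mul_simple_self, one_smul]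
  · exact adj_fold hc rfl (hz.trans (Y.toCoset_adj hc).symm)

variable (hdeg : ∀ s, (G.neighborSet s).ncard ≤ 2)
include hdeg

lemma exists_complexity_lt_of_hasEdge (hst : G.Adj s t) (hfill : ¬ Y.graph.Filled x s t)
    (hxa : Y.graph.Adj s x a) (hxb : Y.graph.Adj t x b) (ha : Y.graph.HasEdge t a) :
    ∃ Y' : CarrierGraph cs H, Y'.complexity < Y.complexity := by
  obtain ⟨z, haz⟩ := ha
  by_cases hbz : Y.graph.HasEdge s z ∨ Y.graph.HasEdge s b
  · exact ⟨Y.fold, complexity_fold_lt hst hfill hxa hxb haz hbz⟩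
  · obtain ⟨hz, hb⟩ := not_or.1 hbz
    have hcoset : Y.toCoset b = cs.simple s • Y.toCoset z := by
      rw [Y.toCoset_adj hxb, Y.toCoset_adj haz, Y.toCoset_adj hxa,
        simple_smul_simple_smul_comm hst.symm, smul_smul, cs.simple_mul_simple_self, one_smul]
    refine ⟨Y.addEdge hz hb hcoset, complexity_lt_of_ncard_boundary_lt ?_⟩
    have hle := FoldedGraph.ncard_boundary_addEdge_add_le hz hb hdeg hst hxa hxb haz
    have hpos : 0 < ({x, a} : Set Y.Vertex).ncard :=
      (Set.ncard_pos (Set.toFinite _)).2 (Set.insert_nonempty _ _)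
    change ((Y.graph.addEdge hz hb).boundary G).ncard < _
    omega

-- Adding a square at two free sides adds one vertex and four darts and does not lengthen the
-- boundary; as there are at least five labels, the second entry of the complexity drops.
lemma exists_complexity_lt_of_not_hasEdge (hconn : G.Preconnected) (hcard : 5 ≤ Nat.card B)
    (hst : G.Adj s t) (hxa : Y.graph.Adj s x a) (hxb : Y.graph.Adj t x b)
    (ha : ¬ Y.graph.HasEdge t a) (hb : ¬ Y.graph.HasEdge s b) :
    ∃ Y' : CarrierGraph cs H, Y'.complexity < Y.complexity := by
  have hcoset : Y.toCoset b = cs.simple s • cs.simple t • Y.toCoset a := by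
    rw [simple_smul_simple_smul_comm hst, ← Y.toCoset_adj (Y.graph.symm hxa), Y.toCoset_adj hxb]
  let Y' := ((Y.addVertex (cs.simple t • Y.toCoset a)).addEdge
    (mt Y.graph.hasEdge_addVertex_some.1 ha) (Y.graph.not_hasEdge_addVertex_none t) rfl).addEdge
    (z := none) (b := some b) (mt (FoldedGraph.hasEdge_of_addVertex_addEdge hst.ne ha)
      (Y.graph.not_hasEdge_addVertex_none s))
    (mt (FoldedGraph.hasEdge_of_addVertex_addEdge hst.ne ha)
      (mt Y.graph.hasEdge_addVertex_some.1 hb)) hcoset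
  have hboundary : (Y'.graph.boundary G).ncard ≤ (Y.graph.boundary G).ncard :=
    FoldedGraph.ncard_boundary_addSquare_le ha hb hdeg hst hxa hxb
  have hdarts : Y'.graph.darts.ncard ≤ Y.graph.darts.ncard + 4 :=
    FoldedGraph.ncard_darts_addSquare_le hst.ne ha hb
  have hsupport : Y.graph.support.ncard + 1 ≤ Y'.graph.support.ncard :=
    FoldedGraph.ncard_support_add_one_le_addSquare hst.ne ha hb
  refine ⟨Y', Prod.Lex.toLex_lt_toLex'.2 ⟨hboundary, fun heq => ?_⟩⟩
  have hle := FoldedGraph.ncard_support_le hconn Y'.graph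
  have hmul := Nat.mul_le_mul_left (Nat.card B) hsupport
  rw [mul_add, mul_one] at hmul
  dsimp only at heq ⊢
  rw [heq] at hle ⊢
  omega

lemma exists_complexity_lt (hconn : G.Preconnected) (hcard : 5 ≤ Nat.card B) (hst : G.Adj s t)
    (hs : Y.graph.HasEdge s x) (ht : Y.graph.HasEdge t x) (hfill : ¬ Y.graph.Filled x s t) :
    ∃ Y' : CarrierGraph cs H, Y'.complexity < Y.complexity := by
  obtain ⟨a, hxa⟩ := hs
  obtain ⟨b, hxb⟩ := ht
  by_cases ha : Y.graph.HasEdge t a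
  · exact exists_complexity_lt_of_hasEdge hdeg hst hfill hxa hxb ha
  by_cases hb : Y.graph.HasEdge s b
  · exact exists_complexity_lt_of_hasEdge hdeg hst.symm (mt .swap hfill) hxb hxa hb
  · exact exists_complexity_lt_of_not_hasEdge hdeg hconn hcard hst hxa hxb ha hb

variable (cs H) in
lemma exists_isSquareClosed [Nonempty (CarrierGraph cs H)] (hconn : G.Preconnected)
    (hcard : 5 ≤ Nat.card B) : ∃ Y : CarrierGraph cs H, Y.graph.IsSquareClosed G := by
  refine ⟨Function.argmin complexity, fun hst hs ht => by_contra fun hfill => ?_⟩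
  obtain ⟨Y', hY'⟩ := exists_complexity_lt hdeg hconn hcard hst hs ht hfill
  exact Function.not_lt_argmin complexity Y' hY'

end CarrierGraph

section Nonempty

variable (cs : CoxeterSystem (racMatrix G) W) (H : Subgroup W) (N : ℕ)

/-- The cosets at distance at most `N` from the base point in the Schreier graph of `W ⧸ H`. -/
def cosetBall : Set (W ⧸ H) := (fun l => (cs.wordProd l : W ⧸ H)) '' {l | l.length ≤ N}

instance finite_cosetBall [Finite B] : Finite (cosetBall cs H N) :=
  ((List.finite_length_le B N).image _).to_subtype

/-- The subgraph of the Schreier graph of `W ⧸ H` spanned by `cosetBall cs H N`. -/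
def cosetBallGraph : FoldedGraph B (cosetBall cs H N) where
  Adj s p q := (q : W ⧸ H) = cs.simple s • p
  symm h := by rw [h, smul_smul, cs.simple_mul_simple_self, one_smul]
  det h h' := Subtype.ext (h.trans h'.symm)

variable {H N} in
lemma walk_cosetBallGraph (l : List B) (hl : l.length ≤ N) :
    (cosetBallGraph cs H N).Walk cs.simple (cs.wordProd l) ⟨_, [], N.zero_le, rfl⟩
      ⟨_, l, hl, rfl⟩ := by
  induction l with
  | nil => exact .refl _
  | cons s l ih =>
    rw [cs.wordProd_cons]
    refine (ih ((Nat.le_succ _).trans hl)).step ?_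
    change ((cs.wordProd (s :: l) : W) : W ⧸ H) = (cs.simple s * cs.wordProd l : W)
    rw [cs.wordProd_cons]

variable {H} in
lemma nonempty_carrierGraph [Finite B] (hH : H.FG) : Nonempty (CarrierGraph cs H) := by
  obtain ⟨S, hS⟩ := hH
  choose word hword using cs.wordProd_surjective
  let N : ℕ := S.sup (fun h => (word h).length)
  let base : cosetBall cs H N := ⟨_, [], N.zero_le, rfl⟩
  have hloops : H ≤ (cosetBallGraph cs H N).loops cs.inv_simple base := by
    refine hS.symm.le.trans ((Subgroup.closure_le _).2 fun h hh => ?_)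
    have hl : (word h).length ≤ N := Finset.le_sup (f := fun h => (word h).length) hh
    have hbase : base = ⟨_, word h, hl, rfl⟩ := by
      refine Subtype.ext (QuotientGroup.eq.2 ?_)
      rw [cs.wordProd_nil, inv_one, one_mul, hword, ← hS]
      exact Subgroup.subset_closure hh
    have hwalk := walk_cosetBallGraph cs (H := H) (word h) hl
    rwa [hword, ← hbase] at hwalk
  exact ⟨{
    Vertex := cosetBall cs H N
    finite := finite_cosetBall cs H N
    graph := cosetBallGraph cs H N
    toCoset := Subtype.val
    toCoset_adj := id
    base := base
    toCoset_base := rfl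
    carries := hloops }⟩

end Nonempty

section Holonomy

lemma isVirtualRetract_of_semidirectProduct {Γ V : Type*} [Group Γ] [Finite V] {H : Subgroup Γ}
    (Φ : Γ →* (V → Γ) ⋊[mulAutArrow] Equiv.Perm V) (x : V)
    (hfix : ∀ h ∈ H, (Φ h).right x = x ∧ (Φ h).left x = h)
    (hmem : ∀ g, (Φ g).right x = x → (Φ g).left x ∈ H) : IsVirtualRetract H := by
  let K : Subgroup Γ :=
    (MulAction.stabilizer (Equiv.Perm V) x).comap (SemidirectProduct.rightHom.comp Φ)
  have hinv : ∀ k : K, (Φ k).right⁻¹ x = x := fun k => Equiv.Perm.inv_eq_iff_eq.2 k.2.symm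
  let r : K →* Γ := MonoidHom.mk' (fun k => (Φ k).left x) fun k k' => by
    change (Φ (k * k' : Γ)).left x = _
    rw [map_mul, SemidirectProduct.mul_left]
    exact congrArg (fun y => (Φ k).left x * (Φ k').left y) (hinv k)
  have hK : K.FiniteIndex := ⟨by
    rw [Subgroup.index_comap]
    exact Subgroup.FiniteIndex.index_ne_zero⟩
  exact ⟨K, r, hK, fun h hh => (hfix h hh).1, fun k => hmem k k.2,
    fun k hk => (hfix k hk).2⟩

namespace FoldedGraph

variable {B V M : Type*} [Group M] (Y : FoldedGraph B V) {r : B → M}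

open Classical in
/-- The involution of the vertices along the edges labelled `s`, extended by the identity. -/
noncomputable def perm (s : B) : Equiv.Perm V :=
  Function.Involutive.toPerm (fun x => if h : Y.HasEdge s x then h.choose else x) fun x => by
    by_cases h : Y.HasEdge s x
    · have hback : Y.HasEdge s h.choose := ⟨x, Y.symm h.choose_spec⟩
      simp only [dif_pos h, dif_pos hback]
      exact Y.det hback.choose_spec (Y.symm h.choose_spec)
    · simp only [dif_neg h]

variable {Y} {s t : B} {x y : V}

lemma perm_perm : Y.perm s (Y.perm s x) = x := (Y.perm s).symm_apply_apply x

lemma perm_of_adj (h : Y.Adj s x y) : Y.perm s x = y := by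
  have hs : Y.HasEdge s x := ⟨y, h⟩
  exact (dif_pos hs).trans (Y.det hs.choose_spec h)

lemma perm_of_not_hasEdge (h : ¬ Y.HasEdge s x) : Y.perm s x = x := dif_neg h

lemma hasEdge_perm_self : Y.HasEdge s (Y.perm s x) ↔ Y.HasEdge s x := by
  constructor <;> rintro ⟨y, h⟩
  · rw [← Y.perm_perm (s := s) (x := x), perm_of_adj h]
    exact ⟨_, Y.symm h⟩
  · rw [perm_of_adj h]
    exact ⟨_, Y.symm h⟩

namespace IsSquareClosed

variable {G : SimpleGraph B} (hY : Y.IsSquareClosed G) (hst : G.Adj s t)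
include hY hst

lemma hasEdge_perm_iff : Y.HasEdge t (Y.perm s x) ↔ Y.HasEdge t x := by
  have himp : ∀ {x}, Y.HasEdge t x → Y.HasEdge t (Y.perm s x) := by
    intro x ht
    by_cases hs : Y.HasEdge s x
    · obtain ⟨a, ha⟩ := hs
      rw [perm_of_adj ha]
      exact (hY hst ⟨a, ha⟩ ht).swap.hasEdge_of_adj ha
    · rwa [perm_of_not_hasEdge hs]
  exact ⟨fun h => by simpa only [perm_perm] using himp h, himp⟩

lemma perm_comm : Y.perm s (Y.perm t x) = Y.perm t (Y.perm s x) := by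
  by_cases hs : Y.HasEdge s x
  · by_cases ht : Y.HasEdge t x
    · obtain ⟨a, b, z, hsq⟩ := hY hst hs ht
      rw [perm_of_adj hsq.bottom, perm_of_adj hsq.left, perm_of_adj hsq.right, perm_of_adj hsq.top]
    · rw [perm_of_not_hasEdge ht, perm_of_not_hasEdge ((hY.hasEdge_perm_iff hst).not.2 ht)]
  · rw [perm_of_not_hasEdge hs, perm_of_not_hasEdge ((hY.hasEdge_perm_iff hst.symm).not.2 hs)]

end IsSquareClosed

variable (Y r) in
open Classical in
/-- The monomial permutation of the vertices along the edges labelled `s`: a vertex at which such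
an edge ends carries the coefficient `r s`, the other ones the coefficient `1`. -/
noncomputable def holonomyGen (s : B) : (V → M) ⋊[mulAutArrow] Equiv.Perm V :=
  ⟨fun x => if Y.HasEdge s x then r s else 1, Y.perm s⟩

open Classical in
lemma holonomyGen_mul_self (hr : r s * r s = 1) :
    Y.holonomyGen r s * Y.holonomyGen r s = 1 := by
  ext x
  · change (if Y.HasEdge s x then r s else 1) * (if Y.HasEdge s (Y.perm s x) then r s else 1) = 1
    rw [hasEdge_perm_self]
    split_ifs
    exacts [hr, one_mul 1]
  · exact perm_perm

open Classical in
lemma IsSquareClosed.commute_holonomyGen {G : SimpleGraph B} (hY : Y.IsSquareClosed G)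
    (hst : G.Adj s t) (hr : Commute (r s) (r t)) :
    Commute (Y.holonomyGen r s) (Y.holonomyGen r t) := by
  ext x
  · change (if Y.HasEdge s x then r s else 1) * (if Y.HasEdge t (Y.perm s x) then r t else 1) =
      (if Y.HasEdge t x then r t else 1) * (if Y.HasEdge s (Y.perm t x) then r s else 1)
    rw [hY.hasEdge_perm_iff hst, hY.hasEdge_perm_iff hst.symm]
    split_ifs
    exacts [hr, Commute.one_right _, Commute.one_left _, rfl]
  · exact hY.perm_comm hst

end FoldedGraph

namespace CarrierGraph

variable {cs : CoxeterSystem (racMatrix G) W} {H : Subgroup W} {Y : CarrierGraph cs H}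
variable (hY : Y.graph.IsSquareClosed G)

/-- The action of `W` by monomial permutations of the vertices of a square-closed carrier graph. -/
noncomputable def holonomy : W →* (Y.Vertex → W) ⋊[mulAutArrow] Equiv.Perm Y.Vertex :=
  cs.lift ⟨Y.graph.holonomyGen cs.simple, racMatrix_isLiftable
    (fun s => FoldedGraph.holonomyGen_mul_self (cs.simple_mul_simple_self s))
    fun _ _ hst => hY.commute_holonomyGen hst (commute_simple_of_adj cs hst)⟩

lemma holonomy_simple (s : B) : holonomy hY (cs.simple s) = Y.graph.holonomyGen cs.simple s :=
  cs.lift_apply_simple _ s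

lemma holonomy_simple_mul_right (s : B) (w : W) (x : Y.Vertex) :
    (holonomy hY (cs.simple s * w)).right x = Y.graph.perm s ((holonomy hY w).right x) := by
  rw [map_mul, holonomy_simple]
  rfl

open Classical in
lemma holonomy_simple_mul_left (s : B) (w : W) (x : Y.Vertex) :
    (holonomy hY (cs.simple s * w)).left (Y.graph.perm s x) =
      (if Y.graph.HasEdge s x then cs.simple s else 1) * (holonomy hY w).left x := by
  rw [map_mul, holonomy_simple]
  change (if Y.graph.HasEdge s (Y.graph.perm s x) then cs.simple s else 1) *
    (holonomy hY w).left (Y.graph.perm s (Y.graph.perm s x)) = _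
  rw [FoldedGraph.hasEdge_perm_self, FoldedGraph.perm_perm]

lemma holonomy_of_walk {w : W} {x y : Y.Vertex} (h : Y.graph.Walk cs.simple w x y) :
    (holonomy hY w).right x = y ∧ (holonomy hY w).left y = w := by
  induction h with
  | refl => rw [map_one]; exact ⟨rfl, rfl⟩
  | @step w s x y z _ hadj ih =>
    constructor
    · rw [holonomy_simple_mul_right, ih.1, FoldedGraph.perm_of_adj hadj]
    · rw [← FoldedGraph.perm_of_adj hadj, holonomy_simple_mul_left, if_pos ⟨z, hadj⟩, ih.2]

lemma toCoset_holonomy (w : W) (x : Y.Vertex) :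
    Y.toCoset ((holonomy hY w).right x) =
      (holonomy hY w).left ((holonomy hY w).right x) • Y.toCoset x := by
  induction w using cs.simple_induction_left with
  | one => rw [map_one]; exact (one_smul W _).symm
  | mul_simple_left w s ih =>
    rw [holonomy_simple_mul_right, holonomy_simple_mul_left, mul_smul, ← ih]
    split_ifs with h
    · obtain ⟨y, hy⟩ := h
      rw [FoldedGraph.perm_of_adj hy, Y.toCoset_adj hy]
    · rw [FoldedGraph.perm_of_not_hasEdge h, one_smul]

include hY in
lemma isVirtualRetract : IsVirtualRetract H := by
  refine isVirtualRetract_of_semidirectProduct (holonomy hY) Y.base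
    (fun h hh => holonomy_of_walk hY (Y.carries h hh)) fun w hw => ?_
  have hcoset := toCoset_holonomy hY w Y.base
  rw [hw, Y.toCoset_base] at hcoset
  simpa using QuotientGroup.eq.1 hcoset

end CarrierGraph

lemma isVirtualRetract_of_fg [Finite B] (hconn : G.Preconnected)
    (hdeg : ∀ s, (G.neighborSet s).ncard ≤ 2) (hcard : 5 ≤ Nat.card B)
    (cs : CoxeterSystem (racMatrix G) W) {H : Subgroup W} (hH : H.FG) : IsVirtualRetract H := by
  have := nonempty_carrierGraph cs hH
  obtain ⟨Y, hY⟩ := CarrierGraph.exists_isSquareClosed cs H hdeg hconn hcard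
  exact CarrierGraph.isVirtualRetract hY

end Holonomy

end CarrierGraphs

section Embedding

variable {Γ M : Type*} [Group Γ] [Group M]

/-- The product `[a₀,b₀][a₁,b₁]⋯[a_{k-1},b_{k-1}]` of the first `k` commutators of two
sequences. -/
def commutatorProd (a b : ℕ → Γ) (k : ℕ) : Γ := ((List.range k).map fun i => ⁅a i, b i⁆).prod

lemma commutatorProd_zero (a b : ℕ → Γ) : commutatorProd a b 0 = 1 := rfl

lemma commutatorProd_succ (a b : ℕ → Γ) (k : ℕ) :
    commutatorProd a b (k + 1) = commutatorProd a b k * ⁅a k, b k⁆ := by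
  simp [commutatorProd, List.range_succ]

lemma map_surfaceRelator {g : ℕ} (F : FreeGroup (Fin g ⊕ Fin g) →* Γ) (a b : ℕ → Γ)
    (ha : ∀ i : Fin g, F (FreeGroup.of (Sum.inl i)) = a i)
    (hb : ∀ i : Fin g, F (FreeGroup.of (Sum.inr i)) = b i) :
    F (surfaceRelator g) = commutatorProd a b g := by
  rw [surfaceRelator, commutatorProd, map_list_prod, List.map_map,
    ← List.map_coe_finRange_eq_range, List.map_map]
  refine congrArg List.prod (List.map_congr_left fun i _ => ?_)
  simp only [Function.comp_apply, map_commutatorElement, ha, hb]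

/-- The image of the `k`-th generator `a` of the surface group under the embedding into the group
generated by the reflections `r 0, …, r (2g + 1)` in the sides of a right-angled polygon. -/
def handleA (r : ℕ → M) (k : ℕ) : M :=
  r 1 * r (2 * k + 1) * r 0 * r (2 * k + 2) * r (2 * k + 1) * r 1

/-- The image of the `k`-th generator `b` of the surface group under the embedding into the group
generated by the reflections `r 0, …, r (2g + 1)` in the sides of a right-angled polygon. -/
def handleB (r : ℕ → M) (k : ℕ) : M :=
  r 1 * r (2 * k + 3) * r (2 * k + 1) * r 1

section Handles

variable {r : ℕ → M}

lemma handle_commutator {x z e e' o : M} (hx : x * x = 1) (hz : z * z = 1) (he : e * e = 1)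
    (he' : e' * e' = 1) (ho : o * o = 1) (heo : Commute e o) (hoe' : Commute o e') :
    (x * z * e * x * e * z) * ⁅z * e * x * o * e * z, z * e' * e * z⁆ =
      x * z * e' * x * e' * z := by
  have hinv : ∀ {y : M}, y * y = 1 → y⁻¹ = y := inv_eq_of_mul_eq_one_left
  have hcancel : ∀ {y : M}, y * y = 1 → ∀ w, y * (y * w) = w := fun hy w => by
    rw [← mul_assoc, hy, one_mul]
  simp only [commutatorElement_def, mul_inv_rev, hinv hx, hinv hz, hinv he, hinv he', hinv ho,
    mul_assoc, hcancel hx, hcancel hz, hcancel he, hcancel ho, heo.symm.left_comm,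
    hoe'.left_comm]

variable (hr : ∀ m, r m * r m = 1) (hcomm : ∀ m, Commute (r m) (r (m + 1)))
include hr hcomm

lemma commutatorProd_handle (k : ℕ) :
    commutatorProd (handleA r) (handleB r) k =
      r 0 * r 1 * r (2 * k + 1) * r 0 * r (2 * k + 1) * r 1 := by
  induction k with
  | zero =>
    rw [commutatorProd_zero, mul_zero, zero_add, mul_assoc (r 0), hr, mul_one, hr, one_mul, hr]
  | succ k ih =>
    rw [commutatorProd_succ, ih]
    exact handle_commutator (hr 0) (hr 1) (hr _) (hr _) (hr (2 * k + 2)) (hcomm _) (hcomm _)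

lemma commutatorProd_handle_eq_one {g : ℕ} (hclose : Commute (r (2 * g + 1)) (r 0)) :
    commutatorProd (handleA r) (handleB r) g = 1 := by
  rw [commutatorProd_handle hr hcomm, mul_assoc _ (r 0), ← hclose.eq, (hcomm 0).eq]
  simp only [mul_assoc]
  rw [← mul_assoc (r (2 * g + 1)) (r (2 * g + 1)), hr, one_mul, ← mul_assoc (r 0) (r 0), hr,
    one_mul, hr]

end Handles

section Sheets

/-- The permutation of `Γ × Bool × Bool`, four sheets each carrying a copy of `Γ`, which exchanges
the two values of the first sheet coordinate, with coefficients `c` depending on the second. -/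
def flipFst (c : Bool → Γ) : Equiv.Perm (Γ × Bool × Bool) :=
  Function.Involutive.toPerm
    (fun p => ((if p.2.1 then (c p.2.2)⁻¹ else c p.2.2) * p.1, !p.2.1, p.2.2)) <| by
      rintro ⟨γ, _ | _, o⟩ <;> simp

/-- The analogue of `flipFst` for the second sheet coordinate. -/
def flipSnd (c : Bool → Γ) : Equiv.Perm (Γ × Bool × Bool) :=
  Function.Involutive.toPerm
    (fun p => ((if p.2.2 then (c p.2.1)⁻¹ else c p.2.1) * p.1, p.2.1, !p.2.2)) <| by
      rintro ⟨γ, e, _ | _⟩ <;> simp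

lemma flipFst_apply (c : Bool → Γ) (γ : Γ) (e o : Bool) :
    flipFst c (γ, e, o) = ((if e then (c o)⁻¹ else c o) * γ, !e, o) := rfl

lemma flipSnd_apply (c : Bool → Γ) (γ : Γ) (e o : Bool) :
    flipSnd c (γ, e, o) = ((if o then (c e)⁻¹ else c e) * γ, e, !o) := rfl

lemma commute_flip {c d : Bool → Γ} (h : d true * c false = c true * d false) :
    Commute (flipFst c) (flipSnd d) := by
  have hd : d true = c true * d false * (c false)⁻¹ := eq_mul_inv_of_mul_eq h
  ext1 ⟨γ, e, o⟩
  cases e <;> cases o <;> simp [flipFst_apply, flipSnd_apply, hd, mul_assoc]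

/-- The product `b_{k-1}⋯b₁b₀`. -/
def revProd (b : ℕ → Γ) : ℕ → Γ
  | 0 => 1
  | k + 1 => b k * revProd b k

variable (a b : ℕ → Γ)

/-- The coefficients of the side `2k` of the polygon, chosen together with `oddCoeff` such that
consecutive sides commute and `handleA`, `handleB` act on the sheet `(false, false)` as left
multiplication by `a`, `b`. -/
def evenCoeff : ℕ → Bool → Γ
  | 0, _ => 1
  | k + 1, false => (revProd b k)⁻¹ * a k * revProd b k
  | k + 1, true => commutatorProd a b k * a k

/-- The coefficients of the side `2k + 1` of the polygon. -/
def oddCoeff (k : ℕ) : Bool → Γ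
  | false => revProd b k
  | true => commutatorProd a b k * revProd b k

/-- The action on four copies of `Γ` of the reflection in the `m`-th side of the polygon. -/
def sideFlip (m : ℕ) : Equiv.Perm (Γ × Bool × Bool) :=
  if Even m then flipSnd (evenCoeff a b (m / 2)) else flipFst (oddCoeff a b (m / 2))

lemma sideFlip_even (k : ℕ) : sideFlip a b (2 * k) = flipSnd (evenCoeff a b k) := by
  simp [sideFlip]

lemma sideFlip_odd (k : ℕ) : sideFlip a b (2 * k + 1) = flipFst (oddCoeff a b k) := by
  simp [sideFlip, show (2 * k + 1) / 2 = k by lia]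

lemma sideFlip_mul_self (m : ℕ) : sideFlip a b m * sideFlip a b m = 1 := by
  rw [sideFlip]
  split_ifs
  · exact Equiv.ext (flipSnd _).symm_apply_apply
  · exact Equiv.ext (flipFst _).symm_apply_apply

lemma commute_sideFlip_succ (m : ℕ) : Commute (sideFlip a b m) (sideFlip a b (m + 1)) := by
  obtain ⟨k, rfl | rfl⟩ := m.even_or_odd'
  · rw [sideFlip_even, sideFlip_odd]
    refine (commute_flip ?_).symm
    cases k with
    | zero => simp only [evenCoeff, oddCoeff, revProd, commutatorProd_zero, mul_one]
    | succ k =>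
      simp only [evenCoeff, oddCoeff, revProd, commutatorProd_succ, commutatorElement_def]
      group
  · rw [sideFlip_odd, show 2 * k + 1 + 1 = 2 * (k + 1) by ring, sideFlip_even]
    refine commute_flip ?_
    simp only [evenCoeff, oddCoeff]
    group

variable {a b} in
lemma commute_sideFlip_last {g : ℕ} (hrel : commutatorProd a b g = 1) :
    Commute (sideFlip a b (2 * g + 1)) (sideFlip a b 0) := by
  rw [sideFlip_odd, ← mul_zero 2, sideFlip_even]
  refine commute_flip ?_
  simp only [evenCoeff, oddCoeff, hrel, one_mul, mul_one]

lemma handleA_sideFlip (k : ℕ) (δ : Γ) :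
    handleA (sideFlip a b) k (δ, false, false) = (a k * δ, false, false) := by
  have h0 : sideFlip a b 0 = _ := sideFlip_even a b 0
  have h1 : sideFlip a b 1 = _ := sideFlip_odd a b 0
  have h2 : sideFlip a b (2 * k + 2) = _ := sideFlip_even a b (k + 1)
  simp [handleA, h0, h1, h2, sideFlip_odd, flipFst_apply, flipSnd_apply, evenCoeff, oddCoeff,
    revProd, mul_assoc]

lemma handleB_sideFlip (k : ℕ) (δ : Γ) :
    handleB (sideFlip a b) k (δ, false, false) = (b k * δ, false, false) := by
  have h1 : sideFlip a b 1 = _ := sideFlip_odd a b 0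
  have h3 : sideFlip a b (2 * k + 3) = _ := sideFlip_odd a b (k + 1)
  simp [handleB, h1, h3, sideFlip_odd, flipFst_apply, oddCoeff, revProd, mul_assoc]

end Sheets

variable {g : ℕ} (cs : CoxeterSystem (racMatrix (SimpleGraph.cycleGraph (2 * g + 2))) M)

/-- The reflections in the sides of the right-angled `(2g + 2)`-gon, indexed periodically. -/
def sideReflection (m : ℕ) : M := cs.simple (Fin.ofNat (2 * g + 2) m)

lemma sideReflection_mul_self (m : ℕ) : sideReflection cs m * sideReflection cs m = 1 :=
  cs.simple_mul_simple_self _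

lemma commute_sideReflection_succ (m : ℕ) :
    Commute (sideReflection cs m) (sideReflection cs (m + 1)) := by
  refine commute_simple_of_adj cs (SimpleGraph.cycleGraph_adj.2 (Or.inr ?_))
  rw [sub_eq_iff_eq_add']
  ext
  simp [Fin.val_add]

lemma commute_sideReflection_last :
    Commute (sideReflection cs (2 * g + 1)) (sideReflection cs 0) := by
  simpa [sideReflection, Fin.ofNat] using commute_sideReflection_succ cs (2 * g + 1)

/-- The embedding of the surface group into the reflection group of the right-angled
`(2g + 2)`-gon. -/
def surfaceHom : PresentedGroup {surfaceRelator g} →* M :=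
  PresentedGroup.toGroup (rels := {surfaceRelator g})
    (f := Sum.elim (fun i : Fin g => handleA (sideReflection cs) i)
      fun i : Fin g => handleB (sideReflection cs) i) <| by
      rintro _ rfl
      rw [map_surfaceRelator _ (handleA (sideReflection cs)) (handleB (sideReflection cs))
        (fun i => by simp) (fun i => by simp)]
      exact commutatorProd_handle_eq_one (sideReflection_mul_self cs)
        (commute_sideReflection_succ cs) (commute_sideReflection_last cs)

section Action

variable {a b : ℕ → Γ} (hrel : commutatorProd a b g = 1)
include hrel

lemma commute_sideFlip_of_adj {s t : Fin (2 * g + 2)}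
    (hst : (SimpleGraph.cycleGraph (2 * g + 2)).Adj s t) :
    Commute (sideFlip a b s) (sideFlip a b t) := by
  have hsucc : ∀ s : Fin (2 * g + 2),
      Commute (sideFlip a b s) (sideFlip a b (1 + s : Fin (2 * g + 2))) := fun s => by
    rw [add_comm 1 s, Fin.val_add_one s]
    split_ifs with hs
    · rw [hs]
      exact commute_sideFlip_last hrel
    · exact commute_sideFlip_succ a b s
  rcases SimpleGraph.cycleGraph_adj.1 hst with h | h
  · rw [sub_eq_iff_eq_add.1 h]
    exact (hsucc t).symm
  · rw [sub_eq_iff_eq_add.1 h]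
    exact hsucc s

/-- The action of the reflection group of the right-angled `(2g + 2)`-gon on four copies of
`Γ`. -/
def sideAction : M →* Equiv.Perm (Γ × Bool × Bool) :=
  cs.lift ⟨fun s => sideFlip a b s, racMatrix_isLiftable (fun s => sideFlip_mul_self a b s)
    fun _ _ hst => commute_sideFlip_of_adj hrel hst⟩

lemma sideAction_sideReflection {m : ℕ} (hm : m < 2 * g + 2) :
    sideAction cs hrel (sideReflection cs m) = sideFlip a b m := by
  refine (cs.lift_apply_simple _ _).trans ?_
  rw [Fin.val_ofNat, Nat.mod_eq_of_lt hm]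

lemma sideAction_handleA {k : ℕ} (hk : k < g) (δ : Γ) :
    sideAction cs hrel (handleA (sideReflection cs) k) (δ, false, false) =
      (a k * δ, false, false) := by
  rw [← handleA_sideFlip a b]
  simp only [handleA, map_mul]
  rw [sideAction_sideReflection, sideAction_sideReflection, sideAction_sideReflection,
    sideAction_sideReflection] <;> lia

lemma sideAction_handleB {k : ℕ} (hk : k < g) (δ : Γ) :
    sideAction cs hrel (handleB (sideReflection cs) k) (δ, false, false) =
      (b k * δ, false, false) := by
  rw [← handleB_sideFlip a b]
  simp only [handleB, map_mul]
  rw [sideAction_sideReflection, sideAction_sideReflection, sideAction_sideReflection] <;> lia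

end Action

section Injectivity

/-- A family of generators of the surface group, extended to a sequence. -/
noncomputable def surfaceGen (ι : Fin g → Fin g ⊕ Fin g) :
    ℕ → PresentedGroup {surfaceRelator g} :=
  Function.extend Fin.val (fun i => PresentedGroup.of (ι i)) 1

lemma surfaceGen_val (ι : Fin g → Fin g ⊕ Fin g) (i : Fin g) :
    surfaceGen ι i = PresentedGroup.of (ι i) :=
  Fin.val_injective.extend_apply _ _ i

lemma commutatorProd_surfaceGen :
    commutatorProd (surfaceGen (g := g) Sum.inl) (surfaceGen Sum.inr) g = 1 := by
  rw [← map_surfaceRelator (PresentedGroup.mk {surfaceRelator g}) _ _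
    (fun i => (surfaceGen_val _ i).symm) fun i => (surfaceGen_val _ i).symm]
  exact PresentedGroup.one_of_mem rfl

lemma sideAction_surfaceHom (γ δ : PresentedGroup {surfaceRelator g}) :
    sideAction cs commutatorProd_surfaceGen (surfaceHom cs γ) (δ, false, false) =
      (γ * δ, false, false) := by
  have hγ : γ ∈ Subgroup.closure (Set.range (PresentedGroup.of (rels := {surfaceRelator g}))) :=
    PresentedGroup.closure_range_of {surfaceRelator g} ▸ Subgroup.mem_top γ
  induction hγ using Subgroup.closure_induction generalizing δ with
  | mem _ hx =>
    obtain ⟨i | i, rfl⟩ := hx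
    · rw [surfaceHom, PresentedGroup.toGroup.of, Sum.elim_inl, sideAction_handleA _ _ i.2,
        surfaceGen_val]
    · rw [surfaceHom, PresentedGroup.toGroup.of, Sum.elim_inr, sideAction_handleB _ _ i.2,
        surfaceGen_val]
  | one => rw [map_one, map_one, one_mul, Equiv.Perm.one_apply]
  | mul x y _ _ hx hy => rw [map_mul, map_mul, Equiv.Perm.mul_apply, hy, hx, mul_assoc]
  | inv x _ hx => rw [map_inv, map_inv, Equiv.Perm.inv_eq_iff_eq, hx, mul_inv_cancel_left]

lemma surfaceHom_injective : Function.Injective (surfaceHom cs) := fun x y hxy => by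
  have hx := sideAction_surfaceHom cs x 1
  rw [hxy, sideAction_surfaceHom cs y 1] at hx
  simpa using (congrArg Prod.fst hx).symm

end Injectivity

end Embedding

/-- Theorem 1.1 (surface case): a finitely generated subgroup of the fundamental group of
a closed surface of genus `g ≥ 2` is closed in the Zariski topology associated to some
faithful finite-dimensional representation. -/
theorem surface_subgroup_zariski_closed (g : ℕ) (hg : 2 ≤ g)
    (Δ₀ : Subgroup (SurfaceGroup g)) (hΔ₀ : Δ₀.FG) :
    ∃ (n : ℕ) (ρ : SurfaceGroup g →* GL (Fin n) ℂ), 1 ≤ n ∧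
      Function.Injective ρ ∧
      ∀ γ : SurfaceGroup g, γ ∉ Δ₀ →
        ∃ P : MvPolynomial (Fin n × Fin n) ℂ,
          (∀ δ ∈ Δ₀, evalAtGL (ρ δ) P = 0) ∧ evalAtGL (ρ γ) P ≠ 0 := by
  let cs := (racMatrix (SimpleGraph.cycleGraph (2 * g + 2))).toCoxeterSystem
  let φ : SurfaceGroup g →* _ := surfaceHom cs
  have hφ : Function.Injective φ := surfaceHom_injective cs
  have hdeg : ∀ s, ((SimpleGraph.cycleGraph (2 * g + 2)).neighborSet s).ncard ≤ 2 := fun s => by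
    rw [SimpleGraph.cycleGraph_neighborSet]
    exact ncard_pair_le _ _
  have hcard : 5 ≤ Nat.card (Fin (2 * g + 2)) := by
    rw [Nat.card_fin]
    omega
  have hfg : (Δ₀.map φ).FG := (Subgroup.fg_iff_submonoid_fg _).2 <|
    ((Subgroup.fg_iff_submonoid_fg Δ₀).1 hΔ₀).map φ
  have hretract : IsVirtualRetract (Δ₀.map φ) :=
    isVirtualRetract_of_fg SimpleGraph.cycleGraph_preconnected hdeg hcard cs hfg
  open scoped ComplexOrder in
  exact (hretract.isFaithfullyZariskiClosed (titsRep_injective ℂ cs)).of_map hφ
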